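/- Let φ(x) be a formula of the correspondence language with at most the free variable x. Then φ(x) is logically equivalent to the (1,1)-standard x-translation ST_11(I,x) of some modal intuitionistic formula I if and only if there exists k ∈ ℕ such that φ(x) is invariant with respect to (1,1)-modal k-asimulations. -/

import Mathlib

namespace ModalIntAsim

/-- Binary relation symbols of the correspondence vocabulary: R, R_□, R_◇. -/
inductive RelSym : Type
  | r | box | diam
deriving DecidableEq

/-- Formulas of the correspondence language: classical first-order logic without
identity, with variables indexed by `ℕ`, unary predicate letters `P n` (n : ℕ),
and the three binary relation symbols. -/
inductive FOForm : Type
  | falsum : FOForm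
  | pred : ℕ → ℕ → FOForm            -- `pred n v` is `P_n(x_v)`
  | rel : RelSym → ℕ → ℕ → FOForm    -- `rel s v w` is `S(x_v, x_w)`
  | conj : FOForm → FOForm → FOForm
  | disj : FOForm → FOForm → FOForm
  | impl : FOForm → FOForm → FOForm
  | all : ℕ → FOForm → FOForm
  | ex : ℕ → FOForm → FOForm

namespace FOForm

/-- Free variables of a correspondence formula. -/
def freeVars : FOForm → Finset ℕ
  | falsum => ∅
  | pred _ v => {v}
  | rel _ v w => {v, w}
  | conj f g => f.freeVars ∪ g.freeVars
  | disj f g => f.freeVars ∪ g.freeVars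
  | impl f g => f.freeVars ∪ g.freeVars
  | all v f => f.freeVars \ {v}
  | ex v f => f.freeVars \ {v}

/-- The unary predicate letters occurring in a formula (the binary relation
symbols R, R_□, R_◇ are regarded as belonging to every vocabulary Σ_φ). -/
def predLetters : FOForm → Finset ℕ
  | falsum => ∅
  | pred n _ => {n}
  | rel _ _ _ => ∅
  | conj f g => f.predLetters ∪ g.predLetters
  | disj f g => f.predLetters ∪ g.predLetters
  | impl f g => f.predLetters ∪ g.predLetters
  | all _ f => f.predLetters
  | ex _ f => f.predLetters

/-- Degree of a formula: the greatest number of nested quantifiers. -/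
def degree : FOForm → ℕ
  | falsum => 0
  | pred _ _ => 0
  | rel _ _ _ => 0
  | conj f g => max f.degree g.degree
  | disj f g => max f.degree g.degree
  | impl f g => max f.degree g.degree
  | all _ f => f.degree + 1
  | ex _ f => f.degree + 1

end FOForm

/-- A model of the correspondence language: a domain together with
interpretations of R, R_□, R_◇ and of the unary predicate letters.
(A Θ-model only consults the letters in Θ.) -/
structure Model : Type 1 where
  U : Type
  rel : U → U → Prop
  relBox : U → U → Prop
  relDiam : U → U → Prop
  pred : ℕ → U → Prop

/-- Interpretation of a binary relation symbol in a model. -/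
def Model.relOf (M : Model) : RelSym → M.U → M.U → Prop
  | .r => M.rel
  | .box => M.relBox
  | .diam => M.relDiam

/-- Tarskian satisfaction of a formula in a model under an assignment. -/
def Sat (M : Model) : FOForm → (ℕ → M.U) → Prop
  | .falsum, _ => False
  | .pred n v, α => M.pred n (α v)
  | .rel s v w, α => M.relOf s (α v) (α w)
  | .conj f g, α => Sat M f α ∧ Sat M g α
  | .disj f g, α => Sat M f α ∨ Sat M g α
  | .impl f g, α => Sat M f α → Sat M g α
  | .all v f, α => ∀ u : M.U, Sat M f (Function.update α v u)
  | .ex v f, α => ∃ u : M.U, Sat M f (Function.update α v u)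

/-- `M, a ⊨ φ(x)`: φ is true in `M` under any assignment sending `x` to `a`. -/
def SatAt (M : Model) (a : M.U) (x : ℕ) (φ : FOForm) : Prop :=
  ∀ α : ℕ → M.U, α x = a → Sat M φ α

/-- Logical equivalence of correspondence formulas. -/
def Equiv (φ ψ : FOForm) : Prop :=
  ∀ (M : Model) (α : ℕ → M.U), Sat M φ α ↔ Sat M ψ α

/-- Logical entailment between correspondence formulas. -/
def Entails (φ ψ : FOForm) : Prop :=
  ∀ (M : Model) (α : ℕ → M.U), Sat M φ α → Sat M ψ α

/-- Modal intuitionistic formulas: built from propositional letters `p n`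
using ⊥, ∧, ∨, →, □, ◇. -/
inductive MForm : Type
  | bot : MForm
  | prop : ℕ → MForm
  | conj : MForm → MForm → MForm
  | disj : MForm → MForm → MForm
  | impl : MForm → MForm → MForm
  | box : MForm → MForm
  | diam : MForm → MForm

/-- The (i,j)-standard x-translation `ST_ij`.  `boxOne = true` means the box
clause (□₁) is used (i = 1), `boxOne = false` means (□₂) (i = 2); likewise
`diamOne = true` means the diamond clause (◇₁) (j = 1) and `diamOne = false`
means (◇₂) (j = 2).  Bound variables are chosen fresh as `x+1`, `x+2`. -/
def ST (boxOne diamOne : Bool) : MForm → ℕ → FOForm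
  | .bot, _ => .falsum
  | .prop n, x => .pred n x
  | .conj I J, x => .conj (ST boxOne diamOne I x) (ST boxOne diamOne J x)
  | .disj I J, x => .disj (ST boxOne diamOne I x) (ST boxOne diamOne J x)
  | .impl I J, x =>
      .all (x + 1) (.impl (.rel .r x (x + 1))
        (.impl (ST boxOne diamOne I (x + 1)) (ST boxOne diamOne J (x + 1))))
  | .box I, x =>
      if boxOne then
        .all (x + 1) (.impl (.rel .box x (x + 1)) (ST boxOne diamOne I (x + 1)))
      else
        .all (x + 1) (.impl (.rel .r x (x + 1))
          (.all (x + 2) (.impl (.rel .box (x + 1) (x + 2)) (ST boxOne diamOne I (x + 2)))))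
  | .diam I, x =>
      if diamOne then
        .ex (x + 1) (.conj (.rel .diam x (x + 1)) (ST boxOne diamOne I (x + 1)))
      else
        .all (x + 1) (.impl (.rel .r x (x + 1))
          (.ex (x + 2) (.conj (.rel .diam (x + 1) (x + 2)) (ST boxOne diamOne I (x + 2)))))

/-! ### Conditions on relations between tuples (the k-asimulation conditions).
A relation between the two models is represented by its two directed
components; `N` is the model of the source tuple and `P` that of the target
tuple.  A tuple `(ā_m, a)` is represented as the list `as ++ [a]`, with
`m = as.length`. -/

section TupleConds

variable (N P : Model)

/-- The "p-type" condition: related tuples are nonempty and of equal length. -/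
def TypeCond (A : List N.U → List P.U → Prop) : Prop :=
  ∀ as bs, A as bs → as ≠ [] ∧ as.length = bs.length

/-- (p-base). -/
def BaseCond (Θ : Set ℕ) (A : List N.U → List P.U → Prop) : Prop :=
  ∀ (as : List N.U) (bs : List P.U) (a : N.U) (b : P.U),
    A (as ++ [a]) (bs ++ [b]) → ∀ n ∈ Θ, N.pred n a → P.pred n b

/-- (p-step). -/
def StepCond (k : ℕ) (A : List N.U → List P.U → Prop)
    (Arev : List P.U → List N.U → Prop) : Prop :=
  ∀ (as : List N.U) (bs : List P.U) (a : N.U) (b d : P.U),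
    A (as ++ [a]) (bs ++ [b]) → P.rel b d → as.length < k →
    ∃ c : N.U, N.rel a c ∧ A (as ++ [a, c]) (bs ++ [b, d]) ∧
      Arev (bs ++ [b, d]) (as ++ [a, c])

/-- (p-box-1). -/
def Box1Cond (k : ℕ) (A : List N.U → List P.U → Prop) : Prop :=
  ∀ (as : List N.U) (bs : List P.U) (a : N.U) (b d : P.U),
    A (as ++ [a]) (bs ++ [b]) → P.relBox b d → as.length < k →
    ∃ c : N.U, N.relBox a c ∧ A (as ++ [a, c]) (bs ++ [b, d])

/-- (p-box-2). -/
def Box2Cond (k : ℕ) (A : List N.U → List P.U → Prop) : Prop :=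
  ∀ (as : List N.U) (bs : List P.U) (a : N.U) (b d f : P.U),
    A (as ++ [a]) (bs ++ [b]) → P.rel b d → P.relBox d f → as.length + 1 < k →
    ∃ c e : N.U, N.rel a c ∧ N.relBox c e ∧ A (as ++ [a, c, e]) (bs ++ [b, d, f])

/-- (p-diam-1). -/
def Diam1Cond (k : ℕ) (A : List N.U → List P.U → Prop) : Prop :=
  ∀ (as : List N.U) (bs : List P.U) (a c : N.U) (b : P.U),
    A (as ++ [a]) (bs ++ [b]) → N.relDiam a c → as.length < k →
    ∃ d : P.U, P.relDiam b d ∧ A (as ++ [a, c]) (bs ++ [b, d])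

/-- (p-diam-2(1)). -/
def Diam2aCond (k : ℕ) (A B : List N.U → List P.U → Prop) : Prop :=
  ∀ (as : List N.U) (bs : List P.U) (a : N.U) (b d : P.U),
    A (as ++ [a]) (bs ++ [b]) → P.rel b d → as.length + 1 < k →
    ∃ c : N.U, N.rel a c ∧ B (as ++ [a, c]) (bs ++ [b, d])

/-- (p-diam-2(2)). -/
def Diam2bCond (k : ℕ) (B A : List N.U → List P.U → Prop) : Prop :=
  ∀ (as : List N.U) (bs : List P.U) (a c : N.U) (b : P.U),
    B (as ++ [a]) (bs ++ [b]) → N.relDiam a c → as.length < k →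
    ∃ d : P.U, P.relDiam b d ∧ A (as ++ [a, c]) (bs ++ [b, d])

end TupleConds

/-- An (i,1)-modal ⟨(M₁,t),(M₂,u)⟩_k-asimulation (j = 1): a single relation `A`
given by its two directed components `A12`, `A21`. -/
def IsKAsimD1 (boxOne : Bool) (Θ : Set ℕ) (M₁ M₂ : Model) (t : M₁.U) (u : M₂.U) (k : ℕ)
    (A12 : List M₁.U → List M₂.U → Prop) (A21 : List M₂.U → List M₁.U → Prop) : Prop :=
  TypeCond M₁ M₂ A12 ∧ TypeCond M₂ M₁ A21 ∧
  A12 [t] [u] ∧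
  BaseCond M₁ M₂ Θ A12 ∧ BaseCond M₂ M₁ Θ A21 ∧
  StepCond M₁ M₂ k A12 A21 ∧ StepCond M₂ M₁ k A21 A12 ∧
  (if boxOne then Box1Cond M₁ M₂ k A12 ∧ Box1Cond M₂ M₁ k A21
   else Box2Cond M₁ M₂ k A12 ∧ Box2Cond M₂ M₁ k A21) ∧
  Diam1Cond M₁ M₂ k A12 ∧ Diam1Cond M₂ M₁ k A21

/-- An (i,2)-modal ⟨(M₁,t),(M₂,u)⟩_k-asimulation (j = 2): an ordered pair
(A, B) of relations, each given by its two directed components. -/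
def IsKAsimD2 (boxOne : Bool) (Θ : Set ℕ) (M₁ M₂ : Model) (t : M₁.U) (u : M₂.U) (k : ℕ)
    (A12 : List M₁.U → List M₂.U → Prop) (A21 : List M₂.U → List M₁.U → Prop)
    (B12 : List M₁.U → List M₂.U → Prop) (B21 : List M₂.U → List M₁.U → Prop) : Prop :=
  TypeCond M₁ M₂ A12 ∧ TypeCond M₂ M₁ A21 ∧
  TypeCond M₁ M₂ B12 ∧ TypeCond M₂ M₁ B21 ∧
  A12 [t] [u] ∧
  BaseCond M₁ M₂ Θ A12 ∧ BaseCond M₂ M₁ Θ A21 ∧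
  StepCond M₁ M₂ k A12 A21 ∧ StepCond M₂ M₁ k A21 A12 ∧
  (if boxOne then Box1Cond M₁ M₂ k A12 ∧ Box1Cond M₂ M₁ k A21
   else Box2Cond M₁ M₂ k A12 ∧ Box2Cond M₂ M₁ k A21) ∧
  Diam2aCond M₁ M₂ k A12 B12 ∧ Diam2aCond M₂ M₁ k A21 B21 ∧
  Diam2bCond M₁ M₂ k B12 A12 ∧ Diam2bCond M₂ M₁ k B21 A21

/-- φ(x) is invariant with respect to (i,1)-modal k-asimulations. -/
def KInvariantD1 (boxOne : Bool) (x : ℕ) (φ : FOForm) (k : ℕ) : Prop :=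
  ∀ Θ : Set ℕ, (φ.predLetters : Set ℕ) ⊆ Θ →
  ∀ (M₁ M₂ : Model) (t : M₁.U) (u : M₂.U)
    (A12 : List M₁.U → List M₂.U → Prop) (A21 : List M₂.U → List M₁.U → Prop),
    IsKAsimD1 boxOne Θ M₁ M₂ t u k A12 A21 →
    ∀ (a : M₁.U) (b : M₂.U), A12 [a] [b] → SatAt M₁ a x φ → SatAt M₂ b x φ

/-- φ(x) is invariant with respect to (i,2)-modal k-asimulations. -/
def KInvariantD2 (boxOne : Bool) (x : ℕ) (φ : FOForm) (k : ℕ) : Prop :=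
  ∀ Θ : Set ℕ, (φ.predLetters : Set ℕ) ⊆ Θ →
  ∀ (M₁ M₂ : Model) (t : M₁.U) (u : M₂.U)
    (A12 : List M₁.U → List M₂.U → Prop) (A21 : List M₂.U → List M₁.U → Prop)
    (B12 : List M₁.U → List M₂.U → Prop) (B21 : List M₂.U → List M₁.U → Prop),
    IsKAsimD2 boxOne Θ M₁ M₂ t u k A12 A21 B12 B21 →
    ∀ (a : M₁.U) (b : M₂.U), A12 [a] [b] → SatAt M₁ a x φ → SatAt M₂ b x φ

/-! ### Conditions for asimulations *simpliciter* (relations between elements). -/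

section ElemConds

variable (N P : Model)

/-- (base). -/
def BaseCondE (Θ : Set ℕ) (A : N.U → P.U → Prop) : Prop :=
  ∀ (a : N.U) (b : P.U), A a b → ∀ n ∈ Θ, N.pred n a → P.pred n b

/-- (step). -/
def StepCondE (A : N.U → P.U → Prop) (Arev : P.U → N.U → Prop) : Prop :=
  ∀ (a : N.U) (b d : P.U), A a b → P.rel b d →
    ∃ c : N.U, N.rel a c ∧ A c d ∧ Arev d c

/-- (box-1). -/
def Box1CondE (A : N.U → P.U → Prop) : Prop :=
  ∀ (a : N.U) (b d : P.U), A a b → P.relBox b d →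
    ∃ c : N.U, N.relBox a c ∧ A c d

/-- (box-2). -/
def Box2CondE (A : N.U → P.U → Prop) : Prop :=
  ∀ (a : N.U) (b d f : P.U), A a b → P.rel b d → P.relBox d f →
    ∃ c e : N.U, N.rel a c ∧ N.relBox c e ∧ A e f

/-- (diam-1). -/
def Diam1CondE (A : N.U → P.U → Prop) : Prop :=
  ∀ (a c : N.U) (b : P.U), A a b → N.relDiam a c →
    ∃ d : P.U, P.relDiam b d ∧ A c d

/-- (diam-2(1)). -/
def Diam2aCondE (A B : N.U → P.U → Prop) : Prop :=
  ∀ (a : N.U) (b d : P.U), A a b → P.rel b d →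
    ∃ c : N.U, N.rel a c ∧ B c d

/-- (diam-2(2)). -/
def Diam2bCondE (B A : N.U → P.U → Prop) : Prop :=
  ∀ (a c : N.U) (b : P.U), B a b → N.relDiam a c →
    ∃ d : P.U, P.relDiam b d ∧ A c d

end ElemConds

/-- An (i,1)-modal ⟨(M₁,t),(M₂,u)⟩-asimulation (j = 1). -/
def IsAsimD1 (boxOne : Bool) (Θ : Set ℕ) (M₁ M₂ : Model) (t : M₁.U) (u : M₂.U)
    (A12 : M₁.U → M₂.U → Prop) (A21 : M₂.U → M₁.U → Prop) : Prop :=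
  A12 t u ∧
  BaseCondE M₁ M₂ Θ A12 ∧ BaseCondE M₂ M₁ Θ A21 ∧
  StepCondE M₁ M₂ A12 A21 ∧ StepCondE M₂ M₁ A21 A12 ∧
  (if boxOne then Box1CondE M₁ M₂ A12 ∧ Box1CondE M₂ M₁ A21
   else Box2CondE M₁ M₂ A12 ∧ Box2CondE M₂ M₁ A21) ∧
  Diam1CondE M₁ M₂ A12 ∧ Diam1CondE M₂ M₁ A21

/-- An (i,2)-modal ⟨(M₁,t),(M₂,u)⟩-asimulation (j = 2). -/
def IsAsimD2 (boxOne : Bool) (Θ : Set ℕ) (M₁ M₂ : Model) (t : M₁.U) (u : M₂.U)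
    (A12 : M₁.U → M₂.U → Prop) (A21 : M₂.U → M₁.U → Prop)
    (B12 : M₁.U → M₂.U → Prop) (B21 : M₂.U → M₁.U → Prop) : Prop :=
  A12 t u ∧
  BaseCondE M₁ M₂ Θ A12 ∧ BaseCondE M₂ M₁ Θ A21 ∧
  StepCondE M₁ M₂ A12 A21 ∧ StepCondE M₂ M₁ A21 A12 ∧
  (if boxOne then Box1CondE M₁ M₂ A12 ∧ Box1CondE M₂ M₁ A21
   else Box2CondE M₁ M₂ A12 ∧ Box2CondE M₂ M₁ A21) ∧
  Diam2aCondE M₁ M₂ A12 B12 ∧ Diam2aCondE M₂ M₁ A21 B21 ∧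
  Diam2bCondE M₁ M₂ B12 A12 ∧ Diam2bCondE M₂ M₁ B21 A21

/-- φ(x) is invariant with respect to (i,1)-modal asimulations. -/
def InvariantD1 (boxOne : Bool) (x : ℕ) (φ : FOForm) : Prop :=
  ∀ Θ : Set ℕ, (φ.predLetters : Set ℕ) ⊆ Θ →
  ∀ (M₁ M₂ : Model) (t : M₁.U) (u : M₂.U)
    (A12 : M₁.U → M₂.U → Prop) (A21 : M₂.U → M₁.U → Prop),
    IsAsimD1 boxOne Θ M₁ M₂ t u A12 A21 →
    ∀ (a : M₁.U) (b : M₂.U), A12 a b → SatAt M₁ a x φ → SatAt M₂ b x φ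

/-- φ(x) is invariant with respect to (i,2)-modal asimulations. -/
def InvariantD2 (boxOne : Bool) (x : ℕ) (φ : FOForm) : Prop :=
  ∀ Θ : Set ℕ, (φ.predLetters : Set ℕ) ⊆ Θ →
  ∀ (M₁ M₂ : Model) (t : M₁.U) (u : M₂.U)
    (A12 : M₁.U → M₂.U → Prop) (A21 : M₂.U → M₁.U → Prop)
    (B12 : M₁.U → M₂.U → Prop) (B21 : M₂.U → M₁.U → Prop),
    IsAsimD2 boxOne Θ M₁ M₂ t u A12 A21 B12 B21 →
    ∀ (a : M₁.U) (b : M₂.U), A12 a b → SatAt M₁ a x φ → SatAt M₂ b x φ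

/-! ### Types, complete conjunctions, ω-saturation. -/

/-- `int(φ,x,l)`: the set of (2,2)-standard x-translations of modal
intuitionistic formulas which are (Σ_φ,x,l)-formulas. -/
def intSet (φ : FOForm) (x l : ℕ) : Set FOForm :=
  {ψ | (∃ I : MForm, ψ = ST false false I x) ∧
    ψ.predLetters ⊆ φ.predLetters ∧ ψ.freeVars ⊆ {x} ∧ ψ.degree ≤ l}

/-- `tp_l(φ(x),M,a)`. -/
def tpSet (φ : FOForm) (x l : ℕ) (M : Model) (a : M.U) : Set FOForm :=
  {ψ | ψ ∈ intSet φ x l ∧ SatAt M a x ψ}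

/-- Conjunction of a nonempty list of formulas. -/
def listConj : FOForm → List FOForm → FOForm
  | ψ, [] => ψ
  | ψ, χ :: L => FOForm.conj ψ (listConj χ L)

/-- Ψ(x) is a complete (φ,x,k)-conjunction. -/
def IsCompleteConj (φ : FOForm) (x k : ℕ) (Ψ : FOForm) : Prop :=
  (∃ (ψ₀ : FOForm) (L : List FOForm), ψ₀ ∈ intSet φ x k ∧
    (∀ χ ∈ L, χ ∈ intSet φ x k) ∧ Ψ = listConj ψ₀ L) ∧
  ∃ (M : Model) (a : M.U), SatAt M a x (FOForm.conj Ψ φ) ∧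
    ∀ ψ ∈ tpSet φ x k M a, Entails Ψ ψ

/-- `int_x(Θ)` for the (i,j)-standard translation. -/
def intX (Θ : Set ℕ) (boxOne diamOne : Bool) (x : ℕ) : Set FOForm :=
  {ψ | (∃ I : MForm, ψ = ST boxOne diamOne I x) ∧ (ψ.predLetters : Set ℕ) ⊆ Θ}

/-- `tp_x(M,t)` for the (i,j)-standard translation. -/
def tpX (Θ : Set ℕ) (boxOne diamOne : Bool) (x : ℕ) (M : Model) (t : M.U) : Set FOForm :=
  {ψ | ψ ∈ intX Θ boxOne diamOne x ∧ SatAt M t x ψ}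

/-- `imp_x(M,t) = ⋂ { t̄p_x(M,u) : t R_◇ u }` (for the (2,2)-translation). -/
def impX (Θ : Set ℕ) (x : ℕ) (M : Model) (t : M.U) : Set FOForm :=
  {ψ | ψ ∈ intX Θ false false x ∧ ∀ u : M.U, M.relDiam t u → ¬ SatAt M u x ψ}

/-- ω-saturation: for every finite tuple of parameters (the first `n` values of
an assignment `α`) and every set `Γ` of formulas with finitely many free
variables beyond the parameters, if `Γ` is consistent with the first-order
theory of `[M,ā]` (i.e. satisfiable together with it in some model), then `Γ`
is realized in `[M,ā]`. -/
def OmegaSaturated (M : Model) : Prop :=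
  ∀ (n : ℕ) (α : ℕ → M.U) (Γ : Set FOForm),
    (∃ k : ℕ, ∀ γ ∈ Γ, γ.freeVars ⊆ Finset.range (n + k)) →
    (∃ (N : Model) (β : ℕ → N.U),
      (∀ ψ : FOForm, ψ.freeVars ⊆ Finset.range n → Sat M ψ α → Sat N ψ β) ∧
      ∀ γ ∈ Γ, Sat N γ β) →
    ∃ α' : ℕ → M.U, (∀ i < n, α' i = α i) ∧ ∀ γ ∈ Γ, Sat M γ α'

/-! ### Relativization to a class κ of models. -/

/-- κ(Θ) is first-order axiomatizable for every finite Θ (with R ∈ Θ): for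
every finite set `S` of unary predicate letters there is a set of Θ-sentences
axiomatizing membership in κ. -/
def FinAxiomatizable (κ : Set Model) : Prop :=
  ∀ S : Finset ℕ, ∃ Ax : Set FOForm,
    (∀ ψ ∈ Ax, ψ.freeVars = ∅ ∧ (ψ.predLetters : Set ℕ) ⊆ (S : Set ℕ)) ∧
    ∀ M : Model, M ∈ κ ↔ ∀ ψ ∈ Ax, ∀ α : ℕ → M.U, Sat M ψ α

/-- φ κ-follows from ψ: {ψ, ¬φ} is not κ-satisfiable. -/
def KappaFollows (κ : Set Model) (ψ φ : FOForm) : Prop :=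
  ¬ ∃ M : Model, M ∈ κ ∧ ∃ α : ℕ → M.U, Sat M ψ α ∧ ¬ Sat M φ α

/-- κ-equivalence of formulas. -/
def KappaEquiv (κ : Set Model) (φ ψ : FOForm) : Prop :=
  KappaFollows κ φ ψ ∧ KappaFollows κ ψ φ

/-- φ(x) is κ-invariant with respect to (i,1)-modal asimulations. -/
def KappaInvariantD1 (κ : Set Model) (boxOne : Bool) (x : ℕ) (φ : FOForm) : Prop :=
  ∀ Θ : Set ℕ, (φ.predLetters : Set ℕ) ⊆ Θ →
  ∀ (M₁ M₂ : Model), M₁ ∈ κ → M₂ ∈ κ →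
  ∀ (t : M₁.U) (u : M₂.U)
    (A12 : M₁.U → M₂.U → Prop) (A21 : M₂.U → M₁.U → Prop),
    IsAsimD1 boxOne Θ M₁ M₂ t u A12 A21 →
    ∀ (a : M₁.U) (b : M₂.U), A12 a b → SatAt M₁ a x φ → SatAt M₂ b x φ

/-- φ(x) is κ-invariant with respect to (i,2)-modal asimulations. -/
def KappaInvariantD2 (κ : Set Model) (boxOne : Bool) (x : ℕ) (φ : FOForm) : Prop :=
  ∀ Θ : Set ℕ, (φ.predLetters : Set ℕ) ⊆ Θ →
  ∀ (M₁ M₂ : Model), M₁ ∈ κ → M₂ ∈ κ →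
  ∀ (t : M₁.U) (u : M₂.U)
    (A12 : M₁.U → M₂.U → Prop) (A21 : M₂.U → M₁.U → Prop)
    (B12 : M₁.U → M₂.U → Prop) (B21 : M₂.U → M₁.U → Prop),
    IsAsimD2 boxOne Θ M₁ M₂ t u A12 A21 B12 B21 →
    ∀ (a : M₁.U) (b : M₂.U), A12 a b → SatAt M₁ a x φ → SatAt M₂ b x φ

/-- φ(x) is κ-invariant with respect to (i,j)-modal asimulations
(`diamOne = true` means j = 1). -/
def KappaInvariant (κ : Set Model) (boxOne diamOne : Bool) (x : ℕ) (φ : FOForm) : Prop :=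
  if diamOne then KappaInvariantD1 κ boxOne x φ else KappaInvariantD2 κ boxOne x φ

/-!
Identify a modal formula with its truth set, a class of pointed models. Starting from finitely many
letters `S` and alternating the modal operations with lattice closures, `k` times, yields a finite
lattice `definable S k` of truth sets. Being finite, it is closed under arbitrary unions and
intersections, so a class of pointed models belongs to it as soon as it is closed upwards for the
preorder comparing `p` and `q` when every class of `definable S k` containing `p` contains `q`.
Applied to the last entries of tuples, with `k` lowered at each step, this preorder is a
`k`-asimulation: the witness demanded by a step, box or diamond condition exists because otherwise
the operation, applied to the least definable class containing a point or the greatest one missing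
it, would separate the two points. Hence the class defined by an invariant `φ` is a truth set.
Conversely, truth of a formula of depth at most `k` transfers along `k`-asimulations.
-/

open Set

/-! ### First-order satisfaction -/

theorem sat_congr {M : Model} {φ : FOForm} {α β : ℕ → M.U}
    (h : ∀ v ∈ φ.freeVars, α v = β v) : Sat M φ α ↔ Sat M φ β := by
  have update_eq {f : FOForm} {v : ℕ} {α β : ℕ → M.U} (h : ∀ w ∈ f.freeVars \ {v}, α w = β w)
      (u : M.U) : ∀ w ∈ f.freeVars, Function.update α v u w = Function.update β v u w := by
    intro w hw
    obtain rfl | hwv := eq_or_ne w v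
    · simp
    · simp [hwv, h w (by simp [hw, hwv])]
  induction φ generalizing α β with
  | falsum => rfl
  | pred n v => simp [Sat, h v (by simp [FOForm.freeVars])]
  | rel s v w => simp [Sat, h v (by simp [FOForm.freeVars]), h w (by simp [FOForm.freeVars])]
  | conj f g hf hg =>
    exact and_congr (hf fun v hv ↦ h v (Finset.mem_union_left _ hv))
      (hg fun v hv ↦ h v (Finset.mem_union_right _ hv))
  | disj f g hf hg =>
    exact or_congr (hf fun v hv ↦ h v (Finset.mem_union_left _ hv))
      (hg fun v hv ↦ h v (Finset.mem_union_right _ hv))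
  | impl f g hf hg =>
    exact imp_congr (hf fun v hv ↦ h v (Finset.mem_union_left _ hv))
      (hg fun v hv ↦ h v (Finset.mem_union_right _ hv))
  | all v f hf => exact forall_congr' fun u ↦ hf (update_eq h u)
  | ex v f hf => exact exists_congr fun u ↦ hf (update_eq h u)

theorem satAt_iff_sat {M : Model} {x : ℕ} {φ : FOForm} (hfv : φ.freeVars ⊆ {x})
    (α : ℕ → M.U) : SatAt M (α x) x φ ↔ Sat M φ α := by
  refine ⟨fun h ↦ h α rfl, fun h β hβ ↦ (sat_congr fun v hv ↦ ?_).1 h⟩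
  rw [Finset.mem_singleton.1 (hfv hv), hβ]

/-- The `Θ`-reduct of a model. Since a `Model` interprets every letter, the letters outside `Θ`
are made false everywhere instead of being forgotten. -/
def Model.reduct (Θ : Set ℕ) (M : Model) : Model where
  U := M.U
  rel := M.rel
  relBox := M.relBox
  relDiam := M.relDiam
  pred n a := n ∈ Θ ∧ M.pred n a

theorem sat_reduct {Θ : Set ℕ} {M : Model} {φ : FOForm} (hφ : (φ.predLetters : Set ℕ) ⊆ Θ)
    (α : ℕ → M.U) : Sat (M.reduct Θ) φ α ↔ Sat M φ α := by
  induction φ generalizing α with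
  | falsum => rfl
  | pred n v => exact and_iff_right (hφ (Finset.mem_singleton_self n))
  | rel s v w => cases s <;> rfl
  | conj f g hf hg =>
    rw [FOForm.predLetters, Finset.coe_union, union_subset_iff] at hφ
    exact and_congr (hf hφ.1 α) (hg hφ.2 α)
  | disj f g hf hg =>
    rw [FOForm.predLetters, Finset.coe_union, union_subset_iff] at hφ
    exact or_congr (hf hφ.1 α) (hg hφ.2 α)
  | impl f g hf hg =>
    rw [FOForm.predLetters, Finset.coe_union, union_subset_iff] at hφ
    exact imp_congr (hf hφ.1 α) (hg hφ.2 α)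
  | all v f hf => exact forall_congr' fun u ↦ hf hφ (Function.update α v u)
  | ex v f hf => exact exists_congr fun u ↦ hf hφ (Function.update α v u)

/-! ### Truth sets of modal formulas -/

/-- A pointed model `(M, a)`; classes of pointed models serve as the meanings of formulas. -/
structure PointedModel : Type 1 where
  model : Model
  point : model.U

/-- The class of pointed models satisfying the `n`-th propositional letter. -/
def letterSet (n : ℕ) : Set PointedModel :=
  {p | p.model.pred n p.point}

/-- The operation on classes of pointed models corresponding to intuitionistic implication. -/
def implSet (X Y : Set PointedModel) : Set PointedModel :=
  {p | ∀ c, p.model.rel p.point c → ⟨p.model, c⟩ ∈ X → ⟨p.model, c⟩ ∈ Y}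

/-- The operation on classes of pointed models corresponding to `□`, read with clause (□₁). -/
def boxSet (X : Set PointedModel) : Set PointedModel :=
  {p | ∀ c, p.model.relBox p.point c → ⟨p.model, c⟩ ∈ X}

/-- The operation on classes of pointed models corresponding to `◇`, read with clause (◇₁). -/
def diamSet (X : Set PointedModel) : Set PointedModel :=
  {p | ∃ c, p.model.relDiam p.point c ∧ ⟨p.model, c⟩ ∈ X}

namespace MForm

/-- The class of pointed models satisfying a modal formula: the Kripke semantics that the
translation `ST true true` expresses in first-order logic. -/
def truthSet : MForm → Set PointedModel
  | bot => ∅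
  | prop n => letterSet n
  | conj I J => I.truthSet ∩ J.truthSet
  | disj I J => I.truthSet ∪ J.truthSet
  | impl I J => implSet I.truthSet J.truthSet
  | box I => boxSet I.truthSet
  | diam I => diamSet I.truthSet

/-- Modal depth: the greatest number of nested occurrences of `→`, `□` and `◇`. Implication counts
because it quantifies over `R`-successors. -/
def depth : MForm → ℕ
  | bot => 0
  | prop _ => 0
  | conj I J => max I.depth J.depth
  | disj I J => max I.depth J.depth
  | impl I J => max I.depth J.depth + 1
  | box I => I.depth + 1
  | diam I => I.depth + 1

theorem isSublattice_range_truthSet : IsSublattice (range truthSet) := by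
  constructor
  · rintro _ ⟨I, rfl⟩ _ ⟨J, rfl⟩
    exact ⟨disj I J, rfl⟩
  · rintro _ ⟨I, rfl⟩ _ ⟨J, rfl⟩
    exact ⟨conj I J, rfl⟩

end MForm

theorem sat_ST_iff_mem_truthSet {M : Model} (I : MForm) (x : ℕ) (α : ℕ → M.U) :
    Sat M (ST true true I x) α ↔ ⟨M, α x⟩ ∈ I.truthSet := by
  induction I generalizing x α with
  | bot => rfl
  | prop n => rfl
  | conj I J hI hJ => exact and_congr (hI x α) (hJ x α)
  | disj I J hI hJ => exact or_congr (hI x α) (hJ x α)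
  | impl I J hI hJ => simp [ST, Sat, MForm.truthSet, implSet, hI, hJ, Model.relOf]
  | box I hI => simp [ST, Sat, MForm.truthSet, boxSet, hI, Model.relOf]
  | diam I hI => simp [ST, Sat, MForm.truthSet, diamSet, hI, Model.relOf]

/-! ### Asimulations preserve truth -/

/-- The conditions of a (1,1)-modal `k`-asimulation that concern one directed component `A`; the
opposite component `B` enters only through the step condition. -/
structure IsHalfKAsim (Θ : Set ℕ) (k : ℕ) (N P : Model)
    (A : List N.U → List P.U → Prop) (B : List P.U → List N.U → Prop) : Prop where
  type : TypeCond N P A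
  base : BaseCond N P Θ A
  step : StepCond N P k A B
  box : Box1Cond N P k A
  diam : Diam1Cond N P k A

theorem isKAsimD1_true_iff {Θ : Set ℕ} {k : ℕ} {M₁ M₂ : Model} {t : M₁.U} {u : M₂.U}
    {A : List M₁.U → List M₂.U → Prop} {B : List M₂.U → List M₁.U → Prop} :
    IsKAsimD1 true Θ M₁ M₂ t u k A B ↔
      A [t] [u] ∧ IsHalfKAsim Θ k M₁ M₂ A B ∧ IsHalfKAsim Θ k M₂ M₁ B A := by
  constructor
  · rintro ⟨tA, tB, hA, baA, baB, sA, sB, ⟨boA, boB⟩, dA, dB⟩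
    exact ⟨hA, ⟨tA, baA, sA, boA, dA⟩, ⟨tB, baB, sB, boB, dB⟩⟩
  · rintro ⟨hA, ⟨tA, baA, sA, boA, dA⟩, ⟨tB, baB, sB, boB, dB⟩⟩
    exact ⟨tA, tB, hA, baA, baB, sA, sB, ⟨boA, boB⟩, dA, dB⟩

theorem IsHalfKAsim.mem_truthSet_reduct {Θ : Set ℕ} {k : ℕ} {N P : Model}
    {A : List N.U → List P.U → Prop} {B : List P.U → List N.U → Prop}
    (hA : IsHalfKAsim Θ k N P A B) (hB : IsHalfKAsim Θ k P N B A) {I : MForm}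
    {as : List N.U} {bs : List P.U} {a : N.U} {b : P.U} (hab : A (as ++ [a]) (bs ++ [b]))
    (hk : as.length + I.depth ≤ k) (ha : ⟨N.reduct Θ, a⟩ ∈ I.truthSet) :
    ⟨P.reduct Θ, b⟩ ∈ I.truthSet := by
  induction I generalizing N P A B as bs a b with
  | bot => exact ha
  | prop n => exact ⟨ha.1, hA.base as bs a b hab n ha.1 ha.2⟩
  | conj I J hI hJ =>
    simp only [MForm.depth] at hk
    exact ⟨hI hA hB hab (by omega) ha.1, hJ hA hB hab (by omega) ha.2⟩
  | disj I J hI hJ =>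
    simp only [MForm.depth] at hk
    exact ha.imp (hI hA hB hab (by omega)) (hJ hA hB hab (by omega))
  | impl I J hI hJ =>
    simp only [MForm.depth] at hk
    intro d hbd hd
    obtain ⟨c, hac, hcd, hdc⟩ := hA.step as bs a b d hab hbd (by omega)
    rw [List.append_cons as, List.append_cons bs] at hcd hdc
    have hlen := (hA.type _ _ hab).2
    have hc := hI hB hA hdc (by rw [← hlen, List.length_append, List.length_singleton]; omega) hd
    exact hJ hA hB hcd (by rw [List.length_append, List.length_singleton]; omega) (ha c hac hc)
  | box I hI =>
    simp only [MForm.depth] at hk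
    intro d hbd
    obtain ⟨c, hac, hcd⟩ := hA.box as bs a b d hab hbd (by omega)
    rw [List.append_cons as, List.append_cons bs] at hcd
    exact hI hA hB hcd (by rw [List.length_append, List.length_singleton]; omega) (ha c hac)
  | diam I hI =>
    simp only [MForm.depth] at hk
    obtain ⟨c, hac, hc⟩ := ha
    obtain ⟨d, hbd, hcd⟩ := hA.diam as bs a c b hab hac (by omega)
    rw [List.append_cons as, List.append_cons bs] at hcd
    exact ⟨d, hbd, hI hA hB hcd (by rw [List.length_append, List.length_singleton]; omega) hc⟩

-- `I` may contain letters outside `Θ`, about which an asimulation says nothing; passing to the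
-- `Θ`-reducts, where these letters are false, does not affect `φ`.
theorem kInvariantD1_of_equiv_ST {x : ℕ} {φ : FOForm} {I : MForm}
    (h : Equiv φ (ST true true I x)) : KInvariantD1 true x φ I.depth := by
  intro Θ hΘ M₁ M₂ t u A B hAB a b hab ha β hβ
  obtain ⟨-, hA, hB⟩ := isKAsimD1_true_iff.1 hAB
  have sat_iff (M : Model) (α : ℕ → M.U) : Sat M φ α ↔ ⟨M.reduct Θ, α x⟩ ∈ I.truthSet :=
    (sat_reduct hΘ α).symm.trans <|
      (h (M.reduct Θ) α).trans (sat_ST_iff_mem_truthSet (M := M.reduct Θ) I x α)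
  have ha' : ⟨M₁.reduct Θ, a⟩ ∈ I.truthSet := (sat_iff M₁ fun _ ↦ a).1 (ha _ rfl)
  rw [sat_iff, hβ]
  exact hA.mem_truthSet_reduct hB (as := []) (bs := []) hab (by simp) ha'

/-! ### The finite lattice of definable classes -/

/-- The lattice generated by the trivial classes, the letters in `S`, and the results of one modal
operation applied to members of `D`. -/
def modalClosure (S : Set ℕ) (D : Set (Set PointedModel)) : Set (Set PointedModel) :=
  latticeClosure
    ({∅, univ} ∪ letterSet '' S ∪ image2 implSet D D ∪ boxSet '' D ∪ diamSet '' D)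

/-- The classes of pointed models definable at level `k` over the letters in `S`, up to logical
equivalence the modal formulas of depth at most `k`. The trivial class `univ` is included at
level `0`, although the formula `⊥ → ⊥` defining it has depth `1`. -/
def definable (S : Set ℕ) : ℕ → Set (Set PointedModel)
  | 0 => modalClosure S ∅
  | k + 1 => modalClosure S (definable S k)

section Definable

variable {S : Set ℕ} {k : ℕ} {D : Set (Set PointedModel)}

theorem finite_modalClosure (hS : S.Finite) (hD : D.Finite) : (modalClosure S D).Finite :=
  (((((toFinite {∅, univ}).union (hS.image _)).union (hD.image2 _ hD)).union
    (hD.image _)).union (hD.image _)).latticeClosure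

theorem modalClosure_subset_range_truthSet (hD : D ⊆ range MForm.truthSet) :
    modalClosure S D ⊆ range MForm.truthSet := by
  refine latticeClosure_min ?_ MForm.isSublattice_range_truthSet
  rintro _ (((((rfl | rfl) | ⟨n, -, rfl⟩) | ⟨X, hX, Y, hY, rfl⟩) | ⟨X, hX, rfl⟩) | ⟨X, hX, rfl⟩)
  · exact ⟨.bot, rfl⟩
  · exact ⟨.impl .bot .bot, eq_univ_of_forall fun _ _ _ h ↦ h⟩
  · exact ⟨.prop n, rfl⟩
  · obtain ⟨⟨I, rfl⟩, ⟨J, rfl⟩⟩ := And.intro (hD hX) (hD hY)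
    exact ⟨.impl I J, rfl⟩
  · obtain ⟨I, rfl⟩ := hD hX
    exact ⟨.box I, rfl⟩
  · obtain ⟨I, rfl⟩ := hD hX
    exact ⟨.diam I, rfl⟩

theorem definable_subset_range_truthSet : definable S k ⊆ range MForm.truthSet := by
  induction k with
  | zero => exact modalClosure_subset_range_truthSet (empty_subset _)
  | succ k ih => exact modalClosure_subset_range_truthSet ih

theorem finite_definable (hS : S.Finite) : (definable S k).Finite := by
  induction k with
  | zero => exact finite_modalClosure hS finite_empty
  | succ k ih => exact finite_modalClosure hS ih

theorem isSublattice_definable : IsSublattice (definable S k) := by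
  cases k <;> exact isSublattice_latticeClosure

theorem empty_mem_definable : ∅ ∈ definable S k := by
  cases k <;> exact subset_latticeClosure (by simp)

theorem univ_mem_definable : univ ∈ definable S k := by
  cases k <;> exact subset_latticeClosure (by simp)

theorem letterSet_mem_definable {n : ℕ} (hn : n ∈ S) : letterSet n ∈ definable S k := by
  have hn' := mem_image_of_mem letterSet hn
  cases k <;> exact subset_latticeClosure (by simp [hn'])

variable {F : Set (Set PointedModel)} {X Y : Set PointedModel}

theorem implSet_mem_definable (hX : X ∈ definable S k) (hY : Y ∈ definable S k) :
    implSet X Y ∈ definable S (k + 1) :=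
  subset_latticeClosure (.inl (.inl (.inr (mem_image2_of_mem hX hY))))

theorem boxSet_mem_definable (hX : X ∈ definable S k) : boxSet X ∈ definable S (k + 1) :=
  subset_latticeClosure (.inl (.inr (mem_image_of_mem _ hX)))

theorem diamSet_mem_definable (hX : X ∈ definable S k) : diamSet X ∈ definable S (k + 1) :=
  subset_latticeClosure (.inr (mem_image_of_mem _ hX))

theorem sInter_mem_definable (hS : S.Finite) (hF : F ⊆ definable S k) : ⋂₀ F ∈ definable S k :=
  isSublattice_definable.infClosed.sInf_mem ((finite_definable hS).subset hF)
    univ_mem_definable hF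

theorem sUnion_mem_definable (hS : S.Finite) (hF : F ⊆ definable S k) : ⋃₀ F ∈ definable S k :=
  isSublattice_definable.supClosed.sSup_mem ((finite_definable hS).subset hF)
    empty_mem_definable hF

/-! ### The definability preorder -/

/-- `DefLE S k p q` says that the positive type of `p`, the set of classes definable at level `k`
over `S` which contain `p`, is included in that of `q`. -/
def DefLE (S : Set ℕ) (k : ℕ) (p q : PointedModel) : Prop :=
  ∀ X ∈ definable S k, p ∈ X → q ∈ X

/-- The least class definable at level `k` over `S` which contains `p`. -/
def leastDefinable (S : Set ℕ) (k : ℕ) (p : PointedModel) : Set PointedModel :=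
  ⋂₀ {X ∈ definable S k | p ∈ X}

/-- The greatest class definable at level `k` over `S` which does not contain `p`. -/
def greatestAvoiding (S : Set ℕ) (k : ℕ) (p : PointedModel) : Set PointedModel :=
  ⋃₀ {X ∈ definable S k | p ∉ X}

variable {p q : PointedModel}

theorem leastDefinable_mem_definable (hS : S.Finite) : leastDefinable S k p ∈ definable S k :=
  sInter_mem_definable hS (sep_subset _ _)

theorem greatestAvoiding_mem_definable (hS : S.Finite) :
    greatestAvoiding S k p ∈ definable S k :=
  sUnion_mem_definable hS (sep_subset _ _)

theorem mem_leastDefinable_iff : q ∈ leastDefinable S k p ↔ DefLE S k p q := by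
  simp [leastDefinable, DefLE]

theorem mem_greatestAvoiding_iff : q ∈ greatestAvoiding S k p ↔ ¬ DefLE S k q p := by
  simp [greatestAvoiding, DefLE, and_assoc, and_comm (a := p ∉ _)]

theorem DefLE.refl : DefLE S k p p :=
  fun _ _ hp ↦ hp

theorem mem_definable_of_forall_defLE (hS : S.Finite)
    (hX : ∀ p ∈ X, ∀ q, DefLE S k p q → q ∈ X) : X ∈ definable S k := by
  have hX_eq : X = ⋃₀ (leastDefinable S k '' X) := by
    ext q
    simp only [sUnion_image, mem_iUnion, exists_prop, mem_leastDefinable_iff]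
    exact ⟨fun hq ↦ ⟨q, hq, .refl⟩, fun ⟨p, hp, hpq⟩ ↦ hX p hp q hpq⟩
  rw [hX_eq]
  exact sUnion_mem_definable hS
    (image_subset_iff.2 fun _ _ ↦ leastDefinable_mem_definable hS)

namespace DefLE

variable {N P : Model} {a c : N.U} {b d : P.U}

theorem exists_rel (hS : S.Finite) (h : DefLE S (k + 1) ⟨N, a⟩ ⟨P, b⟩) (hbd : P.rel b d) :
    ∃ c, N.rel a c ∧ DefLE S k ⟨N, c⟩ ⟨P, d⟩ ∧ DefLE S k ⟨P, d⟩ ⟨N, c⟩ := by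
  by_contra! hc
  have ha : ⟨N, a⟩ ∈ implSet (leastDefinable S k ⟨P, d⟩) (greatestAvoiding S k ⟨P, d⟩) :=
    fun c hac hdc ↦ mem_greatestAvoiding_iff.2
      fun hcd ↦ hc c hac hcd (mem_leastDefinable_iff.1 hdc)
  have hb := h _ (implSet_mem_definable (leastDefinable_mem_definable hS)
    (greatestAvoiding_mem_definable hS)) ha
  exact mem_greatestAvoiding_iff.1 (hb d hbd (mem_leastDefinable_iff.2 .refl)) .refl

theorem exists_relBox (hS : S.Finite) (h : DefLE S (k + 1) ⟨N, a⟩ ⟨P, b⟩)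
    (hbd : P.relBox b d) : ∃ c, N.relBox a c ∧ DefLE S k ⟨N, c⟩ ⟨P, d⟩ := by
  by_contra! hc
  have ha : ⟨N, a⟩ ∈ boxSet (greatestAvoiding S k ⟨P, d⟩) :=
    fun c hac ↦ mem_greatestAvoiding_iff.2 (hc c hac)
  have hb := h _ (boxSet_mem_definable (greatestAvoiding_mem_definable hS)) ha
  exact mem_greatestAvoiding_iff.1 (hb d hbd) .refl

theorem exists_relDiam (hS : S.Finite) (h : DefLE S (k + 1) ⟨N, a⟩ ⟨P, b⟩)
    (hac : N.relDiam a c) : ∃ d, P.relDiam b d ∧ DefLE S k ⟨N, c⟩ ⟨P, d⟩ := by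
  have ha : ⟨N, a⟩ ∈ diamSet (leastDefinable S k ⟨N, c⟩) :=
    ⟨c, hac, mem_leastDefinable_iff.2 .refl⟩
  obtain ⟨d, hbd, hd⟩ := h _ (diamSet_mem_definable (leastDefinable_mem_definable hS)) ha
  exact ⟨d, hbd, mem_leastDefinable_iff.1 hd⟩

end DefLE

/-! ### The canonical asimulation -/

/-- The canonical `k`-asimulation relates tuples of equal length whose last entries are comparable
in the definability preorder, at a level that drops by one with each further entry. Tuples of
length `m + 1` get level `k - m`, whence the `k + 1`. -/
def canonicalKAsim (S : Set ℕ) (k : ℕ) (N P : Model) (as : List N.U) (bs : List P.U) : Prop :=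
  as.length = bs.length ∧ ∃ a ∈ as.getLast?, ∃ b ∈ bs.getLast?,
    DefLE S (k + 1 - as.length) ⟨N, a⟩ ⟨P, b⟩

section CanonicalKAsim

variable {N P : Model} {as : List N.U} {bs : List P.U}

theorem canonicalKAsim_append_singleton {a : N.U} {b : P.U} :
    canonicalKAsim S k N P (as ++ [a]) (bs ++ [b]) ↔
      as.length = bs.length ∧ DefLE S (k - as.length) ⟨N, a⟩ ⟨P, b⟩ := by
  simp [canonicalKAsim]

theorem canonicalKAsim_append_pair {a c : N.U} {b d : P.U} :
    canonicalKAsim S k N P (as ++ [a, c]) (bs ++ [b, d]) ↔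
      as.length = bs.length ∧ DefLE S (k - (as.length + 1)) ⟨N, c⟩ ⟨P, d⟩ := by
  simp [canonicalKAsim]

theorem isHalfKAsim_canonicalKAsim (hS : S.Finite) :
    IsHalfKAsim S k N P (canonicalKAsim S k N P) (canonicalKAsim S k P N) := by
  have level_eq {m : ℕ} (hm : m < k) : k - m = k - (m + 1) + 1 := by omega
  constructor
  case type =>
    rintro as bs ⟨hlen, a, ha, -⟩
    exact ⟨by rintro rfl; simp at ha, hlen⟩
  case base =>
    intro as bs a b hab n hn
    exact (canonicalKAsim_append_singleton.1 hab).2 _ (letterSet_mem_definable hn)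
  case step =>
    intro as bs a b d hab hbd hm
    obtain ⟨hlen, hle⟩ := canonicalKAsim_append_singleton.1 hab
    rw [level_eq hm] at hle
    obtain ⟨c, hac, hcd, hdc⟩ := hle.exists_rel hS hbd
    exact ⟨c, hac, canonicalKAsim_append_pair.2 ⟨hlen, hcd⟩,
      canonicalKAsim_append_pair.2 ⟨hlen.symm, hlen ▸ hdc⟩⟩
  case box =>
    intro as bs a b d hab hbd hm
    obtain ⟨hlen, hle⟩ := canonicalKAsim_append_singleton.1 hab
    rw [level_eq hm] at hle
    obtain ⟨c, hac, hcd⟩ := hle.exists_relBox hS hbd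
    exact ⟨c, hac, canonicalKAsim_append_pair.2 ⟨hlen, hcd⟩⟩
  case diam =>
    intro as bs a c b hab hac hm
    obtain ⟨hlen, hle⟩ := canonicalKAsim_append_singleton.1 hab
    rw [level_eq hm] at hle
    obtain ⟨d, hbd, hcd⟩ := hle.exists_relDiam hS hac
    exact ⟨d, hbd, canonicalKAsim_append_pair.2 ⟨hlen, hcd⟩⟩

theorem isKAsimD1_canonicalKAsim (hS : S.Finite) {a : N.U} {b : P.U}
    (h : DefLE S k ⟨N, a⟩ ⟨P, b⟩) :
    IsKAsimD1 true S N P a b k (canonicalKAsim S k N P) (canonicalKAsim S k P N) :=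
  isKAsimD1_true_iff.2
    ⟨canonicalKAsim_append_singleton (as := []) (bs := []).2 ⟨rfl, h⟩,
      isHalfKAsim_canonicalKAsim hS, isHalfKAsim_canonicalKAsim hS⟩

end CanonicalKAsim

end Definable

theorem KInvariantD1.setOf_satAt_mem_definable {x k : ℕ} {φ : FOForm}
    (hφ : KInvariantD1 true x φ k) :
    {p : PointedModel | SatAt p.model p.point x φ} ∈ definable φ.predLetters k := by
  have hfin := φ.predLetters.finite_toSet
  refine mem_definable_of_forall_defLE hfin fun p hp q hpq ↦ ?_
  have hasim := isKAsimD1_canonicalKAsim hfin hpq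
  exact hφ _ subset_rfl _ _ _ _ _ _ hasim _ _ (isKAsimD1_true_iff.1 hasim).1 hp

/-- **Theorem 1, case (i,j) = (1,1).**  φ(x) is logically equivalent to the
(1,1)-standard x-translation of a modal intuitionistic formula iff there is a
k ∈ ℕ such that φ(x) is invariant with respect to (1,1)-modal k-asimulations. -/
theorem statement_2 (x : ℕ) (φ : FOForm) (hfv : φ.freeVars ⊆ {x}) :
    (∃ I : MForm, Equiv φ (ST true true I x)) ↔
    (∃ k : ℕ, KInvariantD1 true x φ k) := by
  constructor
  · rintro ⟨I, hI⟩
    exact ⟨I.depth, kInvariantD1_of_equiv_ST hI⟩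
  · rintro ⟨k, hk⟩
    obtain ⟨I, hI⟩ := definable_subset_range_truthSet hk.setOf_satAt_mem_definable
    refine ⟨I, fun M α ↦ ?_⟩
    calc
      Sat M φ α ↔ SatAt M (α x) x φ := (satAt_iff_sat hfv α).symm
      _ ↔ PointedModel.mk M (α x) ∈ I.truthSet := (Set.ext_iff.1 hI ⟨M, α x⟩).symm
      _ ↔ Sat M (ST true true I x) α := (sat_ST_iff_mem_truthSet I x α).symm

end ModalIntAsim
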